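/- Let 0 < ε < 1, let q : ℂ → ℂ be compactly supported and Hölder continuous with exponent ε, fix 2 < r < ∞ and k ∈ ℂ. Suppose m₁₁, m₂₁ : ℂ → ℂ are real-differentiable, satisfy ∂̄m₁₁ = q·m₂₁ and ∂m₂₁ + i·k·m₂₁ = conj(q)·m₁₁ on ℂ, with m₁₁ − 1 and m₂₁ in L^r(ℂ) and Hölder continuous with exponent ε; and suppose n₁₂, n₂₂ : ℂ → ℂ are real-differentiable, satisfy ∂̄n₁₂ − i·conj(k)·n₁₂ = q·n₂₂ and ∂n₂₂ = conj(q)·n₁₂ on ℂ, with n₂₂ − 1 and n₁₂ in L^r(ℂ) and Hölder continuous with exponent ε. Then for all z ∈ ℂ one has the symmetry relations m₁₁(z) = conj(n₂₂(z)) and m₂₁(z) = conj(n₁₂(z)). -/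

import Mathlib

open MeasureTheory Complex

/-- Wirtinger derivative `∂f = (∂ₓf − i∂_yf)/2` of `f : ℂ → ℂ`. -/
noncomputable def wD (f : ℂ → ℂ) (z : ℂ) : ℂ :=
  (fderiv ℝ f z 1 - Complex.I * fderiv ℝ f z Complex.I) / 2

/-- Wirtinger derivative `∂̄f = (∂ₓf + i∂_yf)/2` of `f : ℂ → ℂ`. -/
noncomputable def wDbar (f : ℂ → ℂ) (z : ℂ) : ℂ :=
  (fderiv ℝ f z 1 + Complex.I * fderiv ℝ f z Complex.I) / 2

/-- `f` is Hölder continuous with exponent `ε`. -/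
def IsHolder (ε : ℝ) (f : ℂ → ℂ) : Prop :=
  ∃ C ≥ (0 : ℝ), ∀ z z' : ℂ, ‖f z - f z'‖ ≤ C * ‖z - z'‖ ^ ε

/-! The first column of `m(·, k)` and the conjugated, swapped second column of `m(·, conj k)`
solve the same linear system. Their difference `(u, v)` solves it too, and it tends to `0` at
infinity because a uniformly continuous function in `L^r` does. With `e = exp(-i(kz + conj(kz)))`,
which is unimodular, and `w = e · conj v`, the system becomes `∂̄u = Q · conj w`, `∂̄w = Q · conj
u` for `Q = q e`, so `p = u ± w` satisfies the Vekua equation `∂̄p = ±Q · conj p`. In particular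
`|∂̄p| ≤ M |p|`, and Vekua's similarity principle reduces such a `p` to a holomorphic function
vanishing at infinity, which is `0` by Liouville's theorem. The reduction divides by `exp(s)`,
where `s` is a bounded solution of `∂̄s = ∂̄p / p` given by the Cauchy transform. -/

section

open Filter Topology Set Metric
open scoped Real ComplexConjugate

section Wirtinger

variable {f g : ℂ → ℂ} {z : ℂ}

lemma fderiv_eq_wD_mul_add_wDbar_mul_conj (f : ℂ → ℂ) (z v : ℂ) :
    fderiv ℝ f z v = wD f z * v + wDbar f z * conj v := by
  have hv : v = v.re • (1 : ℂ) + v.im • I := by simp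
  have hfv : fderiv ℝ f z v = v.re * fderiv ℝ f z 1 + v.im * fderiv ℝ f z I := by
    conv_lhs => rw [hv, map_add, map_smul, map_smul, real_smul, real_smul]
  have hconj : conj v = v.re - v.im * I := by apply Complex.ext <;> simp
  rw [hfv, hconj, wD, wDbar]
  nth_rw 3 [← re_add_im v]
  linear_combination (v.im * fderiv ℝ f z I) * I_sq

lemma wDbar_add (hf : DifferentiableAt ℝ f z) (hg : DifferentiableAt ℝ g z) :
    wDbar (fun w => f w + g w) z = wDbar f z + wDbar g z := by
  simp only [wDbar, fderiv_fun_add hf hg, add_apply]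
  ring

lemma wDbar_sub (hf : DifferentiableAt ℝ f z) (hg : DifferentiableAt ℝ g z) :
    wDbar (fun w => f w - g w) z = wDbar f z - wDbar g z := by
  simp only [wDbar, fderiv_fun_sub hf hg, sub_apply]
  ring

lemma wD_sub (hf : DifferentiableAt ℝ f z) (hg : DifferentiableAt ℝ g z) :
    wD (fun w => f w - g w) z = wD f z - wD g z := by
  simp only [wD, fderiv_fun_sub hf hg, sub_apply]
  ring

lemma fderiv_conj_comp (hf : DifferentiableAt ℝ f z) (v : ℂ) :
    fderiv ℝ (fun w => conj (f w)) z v = conj (fderiv ℝ f z v) := by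
  have hconj : HasFDerivAt (fun w => conj (f w))
      (conjCLE.toContinuousLinearMap.comp (fderiv ℝ f z)) z :=
    conjCLE.toContinuousLinearMap.hasFDerivAt.comp z hf.hasFDerivAt
  rw [hconj.fderiv]
  rfl

lemma wDbar_conj (hf : DifferentiableAt ℝ f z) :
    wDbar (fun w => conj (f w)) z = conj (wD f z) := by
  simp only [wDbar, wD, fderiv_conj_comp hf, map_div₀, map_sub, map_mul, conj_I, map_ofNat]
  ring

lemma wD_conj (hf : DifferentiableAt ℝ f z) :
    wD (fun w => conj (f w)) z = conj (wDbar f z) := by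
  simp only [wDbar, wD, fderiv_conj_comp hf, map_div₀, map_add, map_mul, conj_I, map_ofNat]
  ring

lemma wDbar_comp_of_hasDerivAt {φ : ℂ → ℂ} {φ' : ℂ} (hf : DifferentiableAt ℝ f (φ z))
    (hφ : HasDerivAt φ φ' z) : wDbar (fun w => f (φ w)) z = wDbar f (φ z) * conj φ' := by
  have hcomp : HasFDerivAt (fun w => f (φ w)) _ z :=
    hf.hasFDerivAt.comp z (hφ.hasFDerivAt.restrictScalars ℝ)
  have happly (v : ℂ) : fderiv ℝ (fun w => f (φ w)) z v = fderiv ℝ f (φ z) (v * φ') := by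
    rw [hcomp.fderiv]
    simp
  rw [wDbar, happly, happly, fderiv_eq_wD_mul_add_wDbar_mul_conj,
    fderiv_eq_wD_mul_add_wDbar_mul_conj]
  simp only [map_mul, map_one, conj_I]
  linear_combination (wD f (φ z) * φ' - wDbar f (φ z) * conj φ') / 2 * I_sq

lemma wDbar_mul_cexp_neg (hf : DifferentiableAt ℝ f z) (hg : DifferentiableAt ℝ g z) :
    wDbar (fun w => f w * cexp (-g w)) z = (wDbar f z - wDbar g z * f z) * cexp (-g z) := by
  have hderiv : HasFDerivAt (fun w => f w * cexp (-g w)) _ z :=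
    hf.hasFDerivAt.mul hg.hasFDerivAt.neg.cexp
  simp only [wDbar, hderiv.fderiv, add_apply, smul_apply, neg_apply, Pi.neg_apply, smul_eq_mul]
  ring

lemma continuous_wDbar (hf : ContDiff ℝ 1 f) : Continuous (wDbar f) := by
  have := hf.continuous_fderiv one_ne_zero
  unfold wDbar
  fun_prop

lemma support_wDbar_subset (f : ℂ → ℂ) : Function.support (wDbar f) ⊆ tsupport f := by
  refine Function.support_subset_iff'.2 fun w hw => ?_
  simp [wDbar, fderiv_of_notMem_tsupport (𝕜 := ℝ) hw]

end Wirtinger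

section CirclePolar

variable {E : Type*} [NormedAddCommGroup E] [NormedSpace ℝ E]

lemma tendsto_circleAverage_atTop_zero {f : ℂ → E} (hf : Tendsto f (cocompact ℂ) (𝓝 0)) (c : ℂ) :
    Tendsto (Real.circleAverage f c) atTop (𝓝 0) := by
  rw [Metric.tendsto_nhds]
  intro η hη
  obtain ⟨r, hr⟩ : ∃ r, ∀ w, r ≤ ‖w‖ → ‖f w‖ < η / 2 := by
    have hsmall : ∀ᶠ w in cocompact ℂ, ‖f w‖ < η / 2 := by
      simpa using Metric.tendsto_nhds.1 hf _ (half_pos hη)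
    rw [← Metric.cobounded_eq_cocompact, ← comap_norm_atTop, eventually_comap] at hsmall
    obtain ⟨r, hr⟩ := eventually_atTop.1 hsmall
    exact ⟨r, fun w hw => hr _ hw w rfl⟩
  filter_upwards [eventually_ge_atTop (r + ‖c‖), eventually_ge_atTop 0] with ρ hρ hρ0
  have hnorm (θ : ℝ) : ‖f (circleMap c ρ θ)‖ ≤ η / 2 := by
    refine (hr _ ?_).le
    have hsub := norm_sub_le (circleMap c ρ θ) c
    rw [circleMap_sub_center, norm_circleMap_zero, abs_of_nonneg hρ0] at hsub
    linarith
  have hint := intervalIntegral.norm_integral_le_of_norm_le_const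
    (a := 0) (b := 2 * π) fun θ _ => hnorm θ
  rw [dist_zero_right, Real.circleAverage, norm_smul, Real.norm_of_nonneg (by positivity),
    inv_mul_lt_iff₀ Real.two_pi_pos]
  rw [sub_zero, abs_of_pos Real.two_pi_pos] at hint
  nlinarith [Real.two_pi_pos]

lemma polarCoord_symm_eq_circleMap (p : ℝ × ℝ) :
    Complex.polarCoord.symm p = circleMap 0 p.1 p.2 := by
  simp [circleMap, exp_mul_I]

lemma circleAverage_eq_integral_Ioo (f : ℂ → E) (c : ℂ) (R : ℝ) :
    Real.circleAverage f c R = (2 * π)⁻¹ • ∫ θ in Ioo (-π) π, f (circleMap c R θ) := by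
  rw [Real.circleAverage_eq_integral_add (-π),
    intervalIntegral.integral_comp_add_right fun θ => f (circleMap c R θ),
    ← integral_Ioc_eq_integral_Ioo, ← intervalIntegral.integral_of_le (by linarith [Real.pi_pos])]
  congr 2 <;> ring

lemma integrableOn_polarCoord_symm {f : ℂ → E} (hf : Integrable f) :
    IntegrableOn (fun p : ℝ × ℝ => p.1 • f (Complex.polarCoord.symm p)) polarCoord.target := by
  have hprod : Integrable fun p : ℝ × ℝ => f (measurableEquivRealProd.symm p) :=
    volume_preserving_equiv_real_prod.symm.integrable_comp_emb
      measurableEquivRealProd.symm.measurableEmbedding |>.2 hf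
  have hpolar := (integrableOn_image_iff_integrableOn_abs_det_fderiv_smul volume
    polarCoord.open_target.measurableSet
    (fun p _ => (hasFDerivAt_polarCoord_symm p).hasFDerivWithinAt) polarCoord.symm.injOn _).1
    hprod.integrableOn
  refine hpolar.congr_fun (fun p hp => ?_) polarCoord.open_target.measurableSet
  have hp0 : 0 < p.1 := hp.1
  simp only [det_fderivPolarCoordSymm, abs_of_pos hp0,
    measurableEquivRealProd_symm_polarCoord_symm_apply]

lemma setIntegral_Ioo_smul_circleMap (f : ℂ → E) (c : ℂ) (ρ : ℝ) :
    ∫ θ in Ioo (-π) π, ρ • f (c + Complex.polarCoord.symm (ρ, θ)) =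
      (2 * π * ρ) • Real.circleAverage f c ρ := by
  have hmap (θ : ℝ) : c + Complex.polarCoord.symm (ρ, θ) = circleMap c ρ θ := by
    rw [polarCoord_symm_eq_circleMap]
    simp [circleMap]
  simp only [hmap, integral_smul, circleAverage_eq_integral_Ioo, smul_smul]
  field_simp

variable {f : ℂ → E}

lemma integrableOn_smul_circleAverage (hf : Integrable f) (c : ℂ) :
    IntegrableOn (fun ρ => (2 * π * ρ) • Real.circleAverage f c ρ) (Ioi 0) := by
  have hpolar := integrableOn_polarCoord_symm (hf.comp_add_left c)
  rw [polarCoord_target, IntegrableOn, Measure.volume_eq_prod, ← Measure.prod_restrict] at hpolar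
  simpa only [IntegrableOn, setIntegral_Ioo_smul_circleMap] using hpolar.integral_prod_left

lemma integral_eq_integral_smul_circleAverage (hf : Integrable f) (c : ℂ) :
    ∫ w, f w = ∫ ρ in Ioi (0 : ℝ), (2 * π * ρ) • Real.circleAverage f c ρ := by
  have hpolar := integrableOn_polarCoord_symm (hf.comp_add_left c)
  rw [polarCoord_target] at hpolar
  rw [← integral_add_left_eq_self f c, ← Complex.integral_comp_polarCoord_symm, polarCoord_target,
    Measure.volume_eq_prod, setIntegral_prod _ hpolar]
  simp only [setIntegral_Ioo_smul_circleMap]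

end CirclePolar

section CauchyTransform

variable {f g h : ℂ → ℂ} {c : ℂ} {ρ : ℝ}

lemma circleMap_exp_eq (c : ℂ) (x θ : ℝ) :
    circleMap c (Real.exp x) θ = c + cexp (x + θ * I) := by
  rw [circleMap, Complex.exp_add, ofReal_exp]

lemma wDbar_comp_add_cexp (hh : Differentiable ℝ h) (c ζ : ℂ) :
    wDbar (fun ζ => h (c + cexp ζ)) ζ = conj (cexp ζ) * wDbar h (c + cexp ζ) := by
  rw [wDbar_comp_of_hasDerivAt (hh _) ((Complex.hasDerivAt_exp ζ).const_add c), mul_comm]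

-- In the logarithmic coordinate `w = c + exp ζ` the annulus is a rectangle whose horizontal sides
-- have the same image, so Stokes' theorem only sees the two circles.
lemma circleAverage_exp_sub_circleAverage_exp (hh : Differentiable ℝ h)
    (hcont : Continuous (wDbar h)) (c : ℂ) (α β : ℝ) :
    Real.circleAverage h c (Real.exp β) - Real.circleAverage h c (Real.exp α) =
      2 * ∫ x in α..β,
        Real.circleAverage (fun w => conj (w - c) * wDbar h w) c (Real.exp x) := by
  let g : ℂ → ℂ := fun ζ => h (c + cexp ζ)
  have hg : Differentiable ℝ g := hh.comp (by fun_prop)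
  have hdbar (ζ : ℂ) : I * fderiv ℝ g ζ 1 - fderiv ℝ g ζ I =
      I * (2 * (conj (cexp ζ) * wDbar h (c + cexp ζ))) := by
    rw [← wDbar_comp_add_cexp hh, wDbar]
    linear_combination (-fderiv ℝ g ζ I) * I_sq
  have hperiodic (x : ℝ) : g (x + (2 * π : ℝ) * I) = g (x + (0 : ℝ) * I) := by
    simp only [g, Complex.exp_add]
    simp
  have hstokes := integral_boundary_rect_of_differentiableOn_real g α (β + (2 * π : ℝ) * I)
    hg.differentiableOn (by
      simp only [smul_eq_mul, hdbar]
      exact Continuous.continuousOn (by fun_prop) |>.integrableOn_compact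
        (isCompact_uIcc.reProdIm isCompact_uIcc))
  simp only [smul_eq_mul, hdbar, hperiodic, add_re, add_im, ofReal_re, ofReal_im, re_ofReal_mul,
    im_ofReal_mul, I_re, I_im, mul_zero, mul_one, add_zero, zero_add, sub_self,
    intervalIntegral.integral_const_mul] at hstokes
  have hcircles := mul_left_cancel₀ I_ne_zero ((mul_sub _ _ _).trans hstokes)
  simp only [Real.circleAverage, circleMap_exp_eq, add_sub_cancel_left, real_smul,
    intervalIntegral.integral_const_mul, ← mul_sub]
  rw [hcircles, mul_left_comm]

lemma hasDerivAt_circleAverage (hh : Differentiable ℝ h) (hcont : Continuous (wDbar h))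
    (hρ : 0 < ρ) :
    HasDerivAt (Real.circleAverage h c)
      (2 * ρ * Real.circleAverage (fun w => (w - c)⁻¹ * wDbar h w) c ρ) ρ := by
  let A : ℝ → ℂ := Real.circleAverage (fun w => conj (w - c) * wDbar h w) c
  have hA : Continuous fun x => A (Real.exp x) :=
    (Real.Continuous.circleAverage (by fun_prop)).comp Real.continuous_exp
  have hAρ : A ρ = ρ ^ 2 * Real.circleAverage (fun w => (w - c)⁻¹ * wDbar h w) c ρ := by
    rw [← ofReal_pow, ← real_smul, ← Real.circleAverage_fun_smul]
    refine Real.circleAverage_congr_sphere fun w hw => ?_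
    have hnorm : ‖w - c‖ = ρ := by simpa [dist_eq_norm, abs_of_pos hρ] using hw
    have hne : w - c ≠ 0 := norm_pos_iff.1 (hnorm ▸ hρ)
    have hconj : (w - c) * conj (w - c) = ρ ^ 2 := by rw [mul_conj', hnorm]
    simp only [real_smul, ofReal_pow, ← hconj]
    field_simp
  have hlog : HasDerivAt (fun x => Real.circleAverage h c (Real.exp x)) (2 * A ρ) (Real.log ρ) := by
    have hftc := ((hA.integral_hasStrictDerivAt 0 (Real.log ρ)).hasDerivAt.const_mul 2).add_const
      (Real.circleAverage h c (Real.exp 0))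
    rw [Real.exp_log hρ] at hftc
    refine hftc.congr_of_eventuallyEq (.of_forall fun x => ?_)
    exact sub_eq_iff_eq_add.1 (circleAverage_exp_sub_circleAverage_exp hh hcont c 0 x)
  have hcomp : HasDerivAt _ _ ρ := hlog.scomp ρ (Real.hasDerivAt_log hρ.ne')
  refine (hcomp.congr_of_eventuallyEq ?_).congr_deriv ?_
  · filter_upwards [lt_mem_nhds hρ] with x hx
    simp only [Function.comp_apply, Real.exp_log hx]
  · rw [hAρ, real_smul, ofReal_inv]
    field_simp

/-- The Cauchy transform `Cf(z) = π⁻¹ ∫ f(w) / (z - w) dw`: the convolution of `f` with the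
fundamental solution `1 / (πz)` of `∂̄`. -/
noncomputable def cauchyTransform (f : ℂ → ℂ) (z : ℂ) : ℂ :=
  (π : ℂ)⁻¹ * ∫ w, (z - w)⁻¹ * f w

lemma locallyIntegrable_inv : LocallyIntegrable fun w : ℂ => w⁻¹ := by
  refine locallyIntegrable_of_norm_le_rpow (C := 1) (α := 1) (by simp) (by simp)
    (.of_forall fun w => ?_) measurable_inv.aestronglyMeasurable
  rw [Real.rpow_neg_one, norm_inv, one_mul]

lemma integrable_inv_sub_mul (hf : Continuous f) (hsupp : HasCompactSupport f) (z : ℂ) :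
    Integrable fun w => (z - w)⁻¹ * f w := by
  have hconv := (hsupp.convolutionExists_right (ContinuousLinearMap.mul ℝ ℂ)
    locallyIntegrable_inv hf z).integrable.comp_sub_left z
  simpa only [ContinuousLinearMap.mul_apply', sub_sub_cancel] using hconv

theorem cauchyTransform_wDbar (hh : Differentiable ℝ h) (hcont : Continuous (wDbar h))
    (hsupp : HasCompactSupport (wDbar h)) (hzero : Tendsto h (cocompact ℂ) (𝓝 0)) (z : ℂ) :
    cauchyTransform (wDbar h) z = h z := by
  have hint : Integrable fun w => (w - z)⁻¹ * wDbar h w := by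
    simpa only [← neg_sub z, inv_neg, neg_mul] using (integrable_inv_sub_mul hcont hsupp z).fun_neg
  have hderiv (ρ : ℝ) (hρ : ρ ∈ Ioi 0) : HasDerivAt (fun ρ => π * Real.circleAverage h z ρ)
      ((2 * π * ρ) • Real.circleAverage (fun w => (w - z)⁻¹ * wDbar h w) z ρ) ρ := by
    refine ((hasDerivAt_circleAverage hh hcont hρ).const_mul (π : ℂ)).congr_deriv ?_
    rw [real_smul, ofReal_mul, ofReal_mul, ofReal_ofNat]
    ring
  have hradial := integral_Ioi_of_hasDerivAt_of_tendsto
    (continuous_const.mul (Real.Continuous.circleAverage hh.continuous)).continuousWithinAt hderiv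
    (integrableOn_smul_circleAverage hint z)
    ((tendsto_circleAverage_atTop_zero hzero z).const_mul (π : ℂ))
  rw [← integral_eq_integral_smul_circleAverage hint, mul_zero, zero_sub, Pi.mul_apply,
    Real.circleAverage_zero] at hradial
  simp only [cauchyTransform, ← neg_sub _ z, inv_neg, neg_mul, integral_neg, hradial]
  field_simp

lemma cauchyTransform_eq_convolution (f : ℂ → ℂ) :
    cauchyTransform f = fun z => (π : ℂ)⁻¹ *
      convolution (fun w : ℂ => w⁻¹) f (ContinuousLinearMap.mul ℝ ℂ) volume z := by
  ext z
  rw [convolution_eq_swap]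
  rfl

lemma hasFDerivAt_cauchyTransform (hg : ContDiff ℝ 1 g) (hsupp : HasCompactSupport g) (z : ℂ) :
    HasFDerivAt (cauchyTransform g) ((π : ℂ)⁻¹ • convolution (fun w : ℂ => w⁻¹) (fderiv ℝ g)
      ((ContinuousLinearMap.mul ℝ ℂ).precompR ℂ) volume z) z := by
  rw [cauchyTransform_eq_convolution]
  exact (hsupp.hasFDerivAt_convolution_right _ locallyIntegrable_inv hg z).const_mul _

lemma differentiable_cauchyTransform (hg : ContDiff ℝ 1 g) (hsupp : HasCompactSupport g) :
    Differentiable ℝ (cauchyTransform g) :=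
  fun z => (hasFDerivAt_cauchyTransform hg hsupp z).differentiableAt

lemma fderiv_cauchyTransform (hg : ContDiff ℝ 1 g) (hsupp : HasCompactSupport g) (z v : ℂ) :
    fderiv ℝ (cauchyTransform g) z v = cauchyTransform (fun w => fderiv ℝ g w v) z := by
  rw [(hasFDerivAt_cauchyTransform hg hsupp z).fderiv, smul_apply, smul_eq_mul,
    convolution_precompR_apply _ locallyIntegrable_inv (hsupp.fderiv ℝ)
      (hg.continuous_fderiv one_ne_zero), cauchyTransform_eq_convolution]

lemma hasCompactSupport_wDbar (hsupp : HasCompactSupport g) : HasCompactSupport (wDbar g) :=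
  hsupp.mono' (support_wDbar_subset g)

theorem wDbar_cauchyTransform (hg : ContDiff ℝ 1 g) (hsupp : HasCompactSupport g) (z : ℂ) :
    wDbar (cauchyTransform g) z = g z := by
  have hint (v : ℂ) : Integrable fun w => (z - w)⁻¹ * fderiv ℝ g w v :=
    integrable_inv_sub_mul ((hg.continuous_fderiv one_ne_zero).clm_apply continuous_const)
      (hsupp.fderiv_apply ℝ v) z
  calc wDbar (cauchyTransform g) z
      = cauchyTransform (wDbar g) z := by
        have hdbar (w : ℂ) : (z - w)⁻¹ * wDbar g w =
            ((z - w)⁻¹ * fderiv ℝ g w 1 + I * ((z - w)⁻¹ * fderiv ℝ g w I)) / 2 := by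
          rw [wDbar]
          ring
        simp only [cauchyTransform, hdbar]
        rw [integral_div, integral_add (hint 1) ((hint I).const_mul I), integral_const_mul, wDbar,
          fderiv_cauchyTransform hg hsupp, fderiv_cauchyTransform hg hsupp, cauchyTransform,
          cauchyTransform]
        ring
    _ = g z := cauchyTransform_wDbar (hg.differentiable one_ne_zero) (continuous_wDbar hg)
        (hasCompactSupport_wDbar hsupp) hsupp.is_zero_at_infty z

/-- A bound for the sup norm of `cauchyTransform` on functions of sup norm `1` supported in `K`,
obtained by bounding the kernel `|w|⁻¹` by `1` outside the unit disc. -/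
noncomputable def cauchyBound (K : Set ℂ) : ℝ :=
  π⁻¹ * ((∫ w in closedBall (0 : ℂ) 1, ‖w⁻¹‖) + volume.real K)

lemma cauchyBound_nonneg (K : Set ℂ) : 0 ≤ cauchyBound K := by
  unfold cauchyBound
  positivity

lemma norm_inv_le_indicator_add_one (w : ℂ) :
    ‖w⁻¹‖ ≤ (closedBall (0 : ℂ) 1).indicator (fun w => ‖w⁻¹‖) w + 1 := by
  by_cases hw : w ∈ closedBall (0 : ℂ) 1
  · rw [indicator_of_mem hw]
    linarith
  · rw [indicator_of_notMem hw, norm_inv, zero_add]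
    exact inv_le_one_of_one_le₀ (by simpa using hw : 1 < ‖w‖).le

lemma norm_cauchyTransform_le {K : Set ℂ} {M : ℝ} (hK : IsCompact K)
    (hf : ∀ w, ‖f w‖ ≤ M) (hsupp : Function.support f ⊆ K) (z : ℂ) :
    ‖cauchyTransform f z‖ ≤ cauchyBound K * M := by
  let N : ℂ → ℝ := (closedBall (0 : ℂ) 1).indicator fun w => ‖w⁻¹‖
  have hM : 0 ≤ M := (norm_nonneg _).trans (hf 0)
  have hN0 (w : ℂ) : 0 ≤ N w := indicator_nonneg (fun _ _ => norm_nonneg _) w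
  have hN : Integrable N :=
    IntegrableOn.integrable_indicator
      (locallyIntegrable_inv.integrableOn_isCompact (isCompact_closedBall 0 1)).norm
      measurableSet_closedBall
  have hK1 : Integrable (K.indicator fun _ => (1 : ℝ)) :=
    (integrableOn_const hK.measure_lt_top.ne).integrable_indicator hK.measurableSet
  have hpoint (w : ℂ) :
      ‖(z - w)⁻¹ * f w‖ ≤ (N (z - w) + K.indicator (fun _ => (1 : ℝ)) w) * M := by
    by_cases hw : w ∈ K
    · rw [norm_mul, indicator_of_mem hw]
      exact mul_le_mul (norm_inv_le_indicator_add_one _) (hf w) (norm_nonneg _)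
        (add_nonneg (hN0 _) zero_le_one)
    · rw [Function.notMem_support.1 (mt (@hsupp w) hw), mul_zero, norm_zero, indicator_of_notMem hw,
        add_zero]
      exact mul_nonneg (hN0 _) hM
  calc ‖cauchyTransform f z‖ = π⁻¹ * ‖∫ w, (z - w)⁻¹ * f w‖ := by
        rw [cauchyTransform, norm_mul, norm_inv, norm_real, Real.norm_of_nonneg Real.pi_pos.le]
    _ ≤ π⁻¹ * ∫ w, (N (z - w) + K.indicator (fun _ => (1 : ℝ)) w) * M := by
        gcongr
        exact norm_integral_le_of_norm_le (((hN.comp_sub_left z).add hK1).mul_const M)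
          (.of_forall hpoint)
    _ = cauchyBound K * M := by
        rw [integral_mul_const, integral_add (hN.comp_sub_left z) hK1, integral_sub_left_eq_self,
          integral_indicator measurableSet_closedBall, integral_indicator hK.measurableSet,
          setIntegral_const, smul_eq_mul, mul_one, cauchyBound, mul_assoc]

end CauchyTransform

section Liouville

lemma exists_continuous_mul_approx {X : Type*} [TopologicalSpace X] {f p : X → ℂ} {M δ : ℝ}
    (hf : Continuous f) (hp : Continuous p) (hM : 0 ≤ M) (hfp : ∀ x, ‖f x‖ ≤ M * ‖p x‖)
    (hδ : 0 < δ) :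
    ∃ g : X → ℂ, Continuous g ∧ Function.support g ⊆ Function.support f ∧ (∀ x, ‖g x‖ ≤ M) ∧
      ∀ x, ‖f x - g x * p x‖ ≤ M * δ := by
  have hden (x : X) : 0 < ‖p x‖ ^ 2 + δ ^ 2 := by positivity
  have hden' (x : X) : ((‖p x‖ ^ 2 + δ ^ 2 : ℝ) : ℂ) ≠ 0 := ofReal_ne_zero.2 (hden x).ne'
  have hnorm (x : X) : ‖((‖p x‖ ^ 2 + δ ^ 2 : ℝ) : ℂ)‖ = ‖p x‖ ^ 2 + δ ^ 2 := by
    rw [norm_real, Real.norm_of_nonneg (hden x).le]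
  have herror (x : X) : f x - f x * conj (p x) / (‖p x‖ ^ 2 + δ ^ 2 : ℝ) * p x =
      f x * δ ^ 2 / (‖p x‖ ^ 2 + δ ^ 2 : ℝ) := by
    rw [eq_div_iff (hden' x), sub_mul, mul_right_comm, div_mul_cancel₀ _ (hden' x), mul_assoc,
      conj_mul']
    push_cast
    ring
  refine ⟨fun x => f x * conj (p x) / (‖p x‖ ^ 2 + δ ^ 2 : ℝ),
    (hf.mul (continuous_conj.comp hp)).div (by fun_prop) hden', fun x hx hfx => hx (by simp [hfx]),
    fun x => ?_, fun x => ?_⟩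
  · rw [norm_div, hnorm, div_le_iff₀ (hden x), norm_mul, norm_conj]
    calc ‖f x‖ * ‖p x‖ ≤ M * ‖p x‖ * ‖p x‖ := by gcongr; exact hfp x
      _ ≤ M * (‖p x‖ ^ 2 + δ ^ 2) := by nlinarith [sq_nonneg δ]
  · rw [herror, norm_div, hnorm, div_le_iff₀ (hden x), norm_mul, norm_pow, norm_real,
      Real.norm_of_nonneg hδ.le]
    calc ‖f x‖ * δ ^ 2 ≤ M * ‖p x‖ * δ ^ 2 := by gcongr; exact hfp x
      _ = M * δ * (‖p x‖ * δ) := by ring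
      _ ≤ M * δ * (‖p x‖ ^ 2 + δ ^ 2) := by
        gcongr
        nlinarith [sq_nonneg (‖p x‖ - δ), norm_nonneg (p x)]

lemma exists_contDiff_mul_approx {E : Type*} [NormedAddCommGroup E] [NormedSpace ℝ E]
    [FiniteDimensional ℝ E] {f p : E → ℂ} {M P δ : ℝ} (hf : Continuous f) (hp : Continuous p)
    (hM : 0 ≤ M) (hfp : ∀ x, ‖f x‖ ≤ M * ‖p x‖) (hP : ∀ x, ‖p x‖ ≤ P) (hδ : 0 < δ) (n : ℕ∞) :
    ∃ g : E → ℂ, ContDiff ℝ n g ∧ Function.support g ⊆ Function.support f ∧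
      (∀ x, ‖g x‖ ≤ M + δ) ∧ ∀ x, ‖f x - g x * p x‖ ≤ (M + P) * δ := by
  obtain ⟨g₀, hg₀, hsupp₀, hbound₀, happrox₀⟩ := exists_continuous_mul_approx hf hp hM hfp hδ
  obtain ⟨g, hg, hclose, hsupp⟩ :=
    hg₀.exists_contDiff_approx n (ε := fun _ => δ) continuous_const fun _ => hδ
  have hclose' (x : E) : ‖g₀ x - g x‖ ≤ δ := by
    simpa only [dist_eq_norm, norm_sub_rev] using (hclose x).le
  refine ⟨g, hg, hsupp.trans hsupp₀, fun x => ?_, fun x => ?_⟩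
  · calc ‖g x‖ ≤ ‖g₀ x‖ + ‖g₀ x - g x‖ := norm_le_norm_add_norm_sub _ _
      _ ≤ M + δ := add_le_add (hbound₀ x) (hclose' x)
  · calc ‖f x - g x * p x‖ = ‖(f x - g₀ x * p x) + (g₀ x - g x) * p x‖ := by ring_nf
      _ ≤ ‖f x - g₀ x * p x‖ + ‖g₀ x - g x‖ * ‖p x‖ := by
        rw [← norm_mul]
        exact norm_add_le _ _
      _ ≤ M * δ + δ * P := by
        gcongr
        exacts [happrox₀ x, hclose' x, hP x]
      _ = (M + P) * δ := by ring

lemma exists_norm_le_of_tendsto_cocompact_zero {X E : Type*} [TopologicalSpace X]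
    [NormedAddCommGroup E] {f : X → E} (hf : Continuous f)
    (hzero : Tendsto f (cocompact X) (𝓝 0)) : ∃ B, ∀ x, ‖f x‖ ≤ B := by
  let f₀ : ZeroAtInftyContinuousMap X E := ⟨⟨f, hf⟩, hzero⟩
  obtain ⟨B, hB⟩ := f₀.isBounded_range.exists_norm_le
  exact ⟨B, fun x => hB _ ⟨x, rfl⟩⟩

lemma norm_le_cauchyBound_mul {h : ℂ → ℂ} {K : Set ℂ} {M : ℝ} (hK : IsCompact K)
    (hh : Differentiable ℝ h) (hcont : Continuous (wDbar h))
    (hhK : Function.support (wDbar h) ⊆ K) (hzero : Tendsto h (cocompact ℂ) (𝓝 0))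
    (hM : ∀ w, ‖wDbar h w‖ ≤ M) (z : ℂ) : ‖h z‖ ≤ cauchyBound K * M := by
  rw [← cauchyTransform_wDbar hh hcont (.of_support_subset_isCompact hK hhK) hzero z]
  exact norm_cauchyTransform_le hK hM hhK z

variable {p G : ℂ → ℂ}

-- With `s = cauchyTransform G`, the function `p exp(-s)` has `∂̄`-derivative `(∂̄p - Gp) exp(-s)`,
-- so it is the Cauchy transform of something small.
lemma norm_le_of_norm_wDbar_sub_mul_le {K : Set ℂ} {A η : ℝ} (hK : IsCompact K)
    (hp : Differentiable ℝ p) (hcont : Continuous (wDbar p))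
    (hpK : Function.support (wDbar p) ⊆ K) (hzero : Tendsto p (cocompact ℂ) (𝓝 0))
    (hG : ContDiff ℝ 1 G) (hGK : Function.support G ⊆ K) (hGA : ∀ w, ‖G w‖ ≤ A)
    (hη : ∀ w, ‖wDbar p w - G w * p w‖ ≤ η) (z : ℂ) :
    ‖p z‖ ≤ cauchyBound K * η * Real.exp (2 * (cauchyBound K * A)) := by
  set B := cauchyBound K * A
  let s := cauchyTransform G
  have hGsupp : HasCompactSupport G := .of_support_subset_isCompact hK hGK
  have hs : Differentiable ℝ s := differentiable_cauchyTransform hG hGsupp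
  have hsB (w : ℂ) : Real.exp ‖s w‖ ≤ Real.exp B :=
    Real.exp_le_exp.2 (norm_cauchyTransform_le hK hGA hGK w)
  have hexp (w : ℂ) : ‖cexp (-s w)‖ ≤ Real.exp B :=
    (norm_exp_le_exp_norm _).trans ((norm_neg (s w)).symm ▸ hsB w)
  let h : ℂ → ℂ := fun w => p w * cexp (-s w)
  have hh : Differentiable ℝ h := hp.mul hs.neg.cexp
  have hdbar : wDbar h = fun w => (wDbar p w - G w * p w) * cexp (-s w) := by
    ext w
    rw [wDbar_mul_cexp_neg (hp w) (hs w), wDbar_cauchyTransform hG hGsupp]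
  have hhK : Function.support (wDbar h) ⊆ K := by
    rw [Function.support_subset_iff'] at hpK hGK ⊢
    intro w hw
    simp [hdbar, hpK w hw, hGK w hw]
  have hhcont : Continuous (wDbar h) := by
    have := hs.continuous
    have := hp.continuous
    have := hG.continuous
    rw [hdbar]
    fun_prop
  have hhbound (w : ℂ) : ‖wDbar h w‖ ≤ η * Real.exp B := by
    rw [hdbar, norm_mul]
    exact mul_le_mul (hη w) (hexp w) (norm_nonneg _) ((norm_nonneg _).trans (hη w))
  have hhzero : Tendsto h (cocompact ℂ) (𝓝 0) :=
    hzero.zero_mul_isBoundedUnder_le (isBoundedUnder_of ⟨_, hexp⟩)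
  calc ‖p z‖ = ‖h z‖ * ‖cexp (s z)‖ := by
        rw [← norm_mul, mul_assoc, ← Complex.exp_add, neg_add_cancel, Complex.exp_zero, mul_one]
    _ ≤ (cauchyBound K * (η * Real.exp B)) * Real.exp B :=
        mul_le_mul (norm_le_cauchyBound_mul hK hh hhcont hhK hhzero hhbound z)
          ((norm_exp_le_exp_norm _).trans (hsB z)) (norm_nonneg _) (mul_nonneg
            (cauchyBound_nonneg K) ((norm_nonneg _).trans (hhbound z)))
    _ = cauchyBound K * η * Real.exp (2 * B) := by
        rw [two_mul, Real.exp_add]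
        ring

-- If `p` had no zeros this would be Liouville's theorem for `p exp(-s)` with `∂̄s = ∂̄p / p`; the
-- quotient is replaced by smooth approximations, with an error that vanishes in the limit.
theorem eq_zero_of_norm_wDbar_le_mul_norm {M : ℝ} (hp : Differentiable ℝ p)
    (hcont : Continuous (wDbar p)) (hsupp : HasCompactSupport (wDbar p)) (hM : 0 ≤ M)
    (hbound : ∀ z, ‖wDbar p z‖ ≤ M * ‖p z‖) (hzero : Tendsto p (cocompact ℂ) (𝓝 0)) : p = 0 := by
  obtain ⟨P, hP⟩ := exists_norm_le_of_tendsto_cocompact_zero hp.continuous hzero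
  set K := tsupport (wDbar p)
  have hsmall (δ : ℝ) (hδ : 0 < δ) (z : ℂ) : ‖p z‖ ≤
      cauchyBound K * ((M + P) * δ) * Real.exp (2 * (cauchyBound K * (M + δ))) := by
    obtain ⟨G, hG, hGsupp, hGbound, hGapprox⟩ :=
      exists_contDiff_mul_approx hcont hp.continuous hM hbound hP hδ 1
    exact norm_le_of_norm_wDbar_sub_mul_le hsupp hp hcont subset_closure hzero hG
      (hGsupp.trans subset_closure) hGbound hGapprox z
  ext z
  have hlimit : Tendsto (fun δ : ℝ =>
      cauchyBound K * ((M + P) * δ) * Real.exp (2 * (cauchyBound K * (M + δ)))) (𝓝[>] 0) (𝓝 0) := by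
    refine tendsto_nhdsWithin_of_tendsto_nhds ?_
    exact Continuous.tendsto' (by fun_prop) 0 0 (by simp)
  refine norm_le_zero_iff.1 (ge_of_tendsto hlimit ?_)
  filter_upwards [self_mem_nhdsWithin] with δ hδ using hsmall δ hδ z

end Liouville

section Decay

theorem tendsto_cocompact_zero_of_memLp_of_uniformContinuous {E F : Type*} [NormedAddCommGroup E]
    [ProperSpace E] [MeasurableSpace E] [BorelSpace E] {μ : Measure E} [μ.IsAddHaarMeasure]
    [NormedAddCommGroup F] {f : E → F} {p : ENNReal} (hp : p ≠ 0) (hp' : p ≠ ⊤)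
    (hf : MemLp f p μ) (hcont : UniformContinuous f) : Tendsto f (cocompact E) (𝓝 0) := by
  rw [Metric.tendsto_nhds]
  intro η hη
  obtain ⟨c, hc, hosc⟩ := Metric.uniformContinuous_iff.1 hcont (η / 2) (half_pos hη)
  let S : Set E := {x | (η / 2).toNNReal ≤ ‖f x‖₊}
  have hS : MeasurableSet S :=
    (isClosed_le continuous_const hcont.continuous.nnnorm).measurableSet
  have hSfin : μ S < ⊤ := hf.meas_ge_lt_top hp hp' (by simpa using hη)
  obtain ⟨K, -, hK, hdiff⟩ := hS.exists_isCompact_sdiff_lt hSfin.ne (measure_ball_pos μ 0 hc).ne'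
  filter_upwards [(hK.cthickening (r := c)).compl_mem_cocompact] with z hz
  by_contra! hlarge
  have hsub : ball z c ⊆ S \ K := fun w hw => by
    refine ⟨?_, fun hwK => hz (closedBall_subset_cthickening hwK c (ball_subset_closedBall ?_))⟩
    · have := hosc hw
      have := dist_triangle_left (f z) 0 (f w)
      rw [mem_ofPred_eq, Real.toNNReal_le_iff_le_coe, coe_nnnorm, ← dist_zero_right]
      linarith
    · rwa [mem_ball_comm]
  exact (measure_mono hsub).not_gt (hdiff.trans_eq (Measure.addHaar_ball_center μ z c).symm)

variable {ε : ℝ} {f : ℂ → ℂ}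

lemma IsHolder.uniformContinuous (hf : IsHolder ε f) (hε : 0 < ε) : UniformContinuous f := by
  obtain ⟨C, -, hbound⟩ := hf
  refine tendsto_uniformity_iff_dist_tendsto_zero.2 <|
    squeeze_zero (fun _ => dist_nonneg) (g := fun x : ℂ × ℂ => C * dist x.1 x.2 ^ ε)
      (fun x => by simpa only [dist_eq_norm] using hbound x.1 x.2) ?_
  have hdist : Tendsto (fun x : ℂ × ℂ => dist x.1 x.2) (uniformity ℂ) (𝓝 0) :=
    tendsto_uniformity_iff_dist_tendsto_zero.1 tendsto_id
  simpa [Real.zero_rpow hε.ne'] using (hdist.rpow_const (.inr hε.le)).const_mul C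

lemma IsHolder.tendsto_cocompact_zero {r : ℝ} (hf : IsHolder ε f) (hε : 0 < ε) (hr : 0 < r)
    (hLp : MemLp f (ENNReal.ofReal r)) : Tendsto f (cocompact ℂ) (𝓝 0) :=
  tendsto_cocompact_zero_of_memLp_of_uniformContinuous (ENNReal.ofReal_pos.2 hr).ne'
    ENNReal.ofReal_ne_top hLp (hf.uniformContinuous hε)

end Decay

section System

lemma eq_zero_of_wDbar_eq_mul_conj {Q p : ℂ → ℂ} (hQ : Continuous Q) (hQsupp : HasCompactSupport Q)
    (hp : Differentiable ℝ p) (hdbar : ∀ z, wDbar p z = Q z * conj (p z))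
    (hzero : Tendsto p (cocompact ℂ) (𝓝 0)) : p = 0 := by
  obtain ⟨M, hM⟩ := hQsupp.exists_bound_of_continuous hQ
  have hdbar' : wDbar p = fun z => Q z * conj (p z) := funext hdbar
  refine eq_zero_of_norm_wDbar_le_mul_norm (M := M) hp ?_ ?_ ((norm_nonneg _).trans (hM 0)) ?_ hzero
  · rw [hdbar']
    exact hQ.mul (continuous_conj.comp hp.continuous)
  · rw [hdbar']
    exact hQsupp.mul_right
  · intro z
    rw [hdbar, norm_mul, norm_conj]
    gcongr
    exact hM z

lemma eq_zero_and_eq_zero_of_wDbar_eq_mul_conj {Q u w : ℂ → ℂ} (hQ : Continuous Q)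
    (hQsupp : HasCompactSupport Q) (hu : Differentiable ℝ u) (hw : Differentiable ℝ w)
    (hdbaru : ∀ z, wDbar u z = Q z * conj (w z)) (hdbarw : ∀ z, wDbar w z = Q z * conj (u z))
    (huzero : Tendsto u (cocompact ℂ) (𝓝 0)) (hwzero : Tendsto w (cocompact ℂ) (𝓝 0)) :
    u = 0 ∧ w = 0 := by
  have hadd : (fun z => u z + w z) = 0 := by
    refine eq_zero_of_wDbar_eq_mul_conj hQ hQsupp (hu.add hw) (fun z => ?_)
      (by simpa using huzero.add hwzero)
    rw [wDbar_add (hu z) (hw z), hdbaru, hdbarw, map_add]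
    ring
  have hsub : (fun z => u z - w z) = 0 := by
    refine eq_zero_of_wDbar_eq_mul_conj hQ.neg hQsupp.neg (hu.sub hw) (fun z => ?_)
      (by simpa using huzero.sub hwzero)
    rw [wDbar_sub (hu z) (hw z), hdbaru, hdbarw, map_sub, Pi.neg_apply]
    ring
  have haddz (z : ℂ) : u z + w z = 0 := congrFun hadd z
  have hsubz (z : ℂ) : u z - w z = 0 := congrFun hsub z
  constructor <;> ext z <;> rw [Pi.zero_apply]
  · linear_combination (haddz z + hsubz z) / 2
  · linear_combination (haddz z - hsubz z) / 2

/-- The phase `i(kz + conj(kz))`, whose exponential is unimodular; conjugating by it removes the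
zeroth-order term `ik` from the system `IsFirstColumn`. -/
noncomputable def phase (k z : ℂ) : ℂ :=
  I * (k * z + conj (k * z))

lemma differentiable_conj {f : ℂ → ℂ} (hf : Differentiable ℝ f) :
    Differentiable ℝ fun z => conj (f z) :=
  conjCLE.toContinuousLinearMap.differentiable.comp hf

lemma differentiable_phase (k : ℂ) : Differentiable ℝ (phase k) := by
  have hlin : Differentiable ℝ fun z : ℂ => k * z := by fun_prop
  exact (hlin.add (differentiable_conj hlin)).const_mul I

lemma norm_cexp_neg_phase (k z : ℂ) : ‖cexp (-phase k z)‖ = 1 := by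
  have hphase : -phase k z = (-(2 * (k * z).re) : ℝ) * I := by
    rw [phase, add_conj, mul_comm I, ofReal_neg, neg_mul]
  rw [hphase, norm_exp_ofReal_mul_I]

lemma wDbar_phase (k z : ℂ) : wDbar (phase k) z = I * conj k := by
  have hlin : HasFDerivAt (fun z : ℂ => k * z) (k • ContinuousLinearMap.id ℝ ℂ) z :=
    (hasFDerivAt_id z).const_mul k
  have hphase : HasFDerivAt (phase k) _ z :=
    (hlin.add (conjCLE.toContinuousLinearMap.hasFDerivAt.comp z hlin)).const_mul I
  simp only [wDbar, hphase.fderiv, smul_apply, add_apply, ContinuousLinearMap.comp_apply,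
    ContinuousLinearMap.id_apply, smul_eq_mul, ContinuousLinearEquiv.coe_coe, conjCLE_apply,
    map_mul, conj_I, mul_one]
  linear_combination (I * (k - conj k) / 2) * I_sq

/-- `(u, v)` solves the system `∂̄u = qv`, `∂v + ikv = conj(q)u` satisfied by the first column of
the exponentially growing solution at spectral parameter `k`. -/
structure IsFirstColumn (q : ℂ → ℂ) (k : ℂ) (u v : ℂ → ℂ) : Prop where
  differentiable_fst : Differentiable ℝ u
  differentiable_snd : Differentiable ℝ v
  wDbar_fst : ∀ z, wDbar u z = q z * v z
  wD_snd : ∀ z, wD v z + I * k * v z = conj (q z) * u z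

namespace IsFirstColumn

variable {q u v u₁ v₁ u₂ v₂ : ℂ → ℂ} {k : ℂ}

lemma sub (h₁ : IsFirstColumn q k u₁ v₁) (h₂ : IsFirstColumn q k u₂ v₂) :
    IsFirstColumn q k (fun z => u₁ z - u₂ z) (fun z => v₁ z - v₂ z) where
  differentiable_fst := h₁.differentiable_fst.sub h₂.differentiable_fst
  differentiable_snd := h₁.differentiable_snd.sub h₂.differentiable_snd
  wDbar_fst z := by
    rw [wDbar_sub (h₁.differentiable_fst z) (h₂.differentiable_fst z)]
    linear_combination h₁.wDbar_fst z - h₂.wDbar_fst z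
  wD_snd z := by
    rw [wD_sub (h₁.differentiable_snd z) (h₂.differentiable_snd z)]
    linear_combination h₁.wD_snd z - h₂.wD_snd z

lemma of_conj (hv : Differentiable ℝ v) (hu : Differentiable ℝ u)
    (hdbar : ∀ z, wDbar v z - I * conj k * v z = q z * u z)
    (hd : ∀ z, wD u z = conj (q z) * v z) :
    IsFirstColumn q k (fun z => conj (u z)) (fun z => conj (v z)) where
  differentiable_fst := differentiable_conj hu
  differentiable_snd := differentiable_conj hv
  wDbar_fst z := by rw [wDbar_conj (hu z), hd, map_mul, conj_conj]
  wD_snd z := by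
    rw [wD_conj (hv z), sub_eq_iff_eq_add.1 (hdbar z)]
    simp only [map_add, map_mul, conj_I, conj_conj]
    ring

theorem eq_zero (h : IsFirstColumn q k u v) (hq : Continuous q) (hqsupp : HasCompactSupport q)
    (hu : Tendsto u (cocompact ℂ) (𝓝 0)) (hv : Tendsto v (cocompact ℂ) (𝓝 0)) :
    u = 0 ∧ v = 0 := by
  let e : ℂ → ℂ := fun z => cexp (-phase k z)
  let w : ℂ → ℂ := fun z => conj (v z) * e z
  have hvconj := differentiable_conj h.differentiable_snd
  have he : Continuous e := (differentiable_phase k).continuous.neg.cexp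
  have hnorm (z : ℂ) : ‖e z‖ = 1 := norm_cexp_neg_phase k z
  have hunimod (z : ℂ) : e z * conj (e z) = 1 := by simp [mul_conj', hnorm]
  have hdbaru (z : ℂ) : wDbar u z = q z * e z * conj (w z) := by
    simp only [h.wDbar_fst, w, map_mul, conj_conj]
    linear_combination (-(q z * v z)) * hunimod z
  have hdbarw (z : ℂ) : wDbar w z = q z * e z * conj (u z) := by
    rw [wDbar_mul_cexp_neg (hvconj z) (differentiable_phase k z), wDbar_phase,
      wDbar_conj (h.differentiable_snd z), eq_sub_of_add_eq (h.wD_snd z)]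
    simp only [map_sub, map_mul, conj_I, conj_conj, e]
    ring
  have hwzero : Tendsto w (cocompact ℂ) (𝓝 0) := by
    rw [tendsto_zero_iff_norm_tendsto_zero] at hv ⊢
    simpa [w, hnorm] using hv
  obtain ⟨hu0, hw0⟩ := eq_zero_and_eq_zero_of_wDbar_eq_mul_conj (hq.mul he) hqsupp.mul_right
    h.differentiable_fst (hvconj.mul (differentiable_phase k).neg.cexp) hdbaru hdbarw hu hwzero
  refine ⟨hu0, funext fun z => ?_⟩
  simpa [w, e, Complex.exp_ne_zero] using congrFun hw0 z

end IsFirstColumn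

end System

theorem symmetry_of_exponentially_growing_solutions_general {q : ℂ → ℂ} (hq : Continuous q)
    (hqsupp : HasCompactSupport q) {k : ℂ} {m11 m21 n12 n22 : ℂ → ℂ}
    (hm : IsFirstColumn q k m11 m21)
    (hm11 : Tendsto m11 (cocompact ℂ) (𝓝 1)) (hm21 : Tendsto m21 (cocompact ℂ) (𝓝 0))
    (hn12d : Differentiable ℝ n12) (hn22d : Differentiable ℝ n22)
    (hn1 : ∀ z, wDbar n12 z - I * conj k * n12 z = q z * n22 z)
    (hn2 : ∀ z, wD n22 z = conj (q z) * n12 z)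
    (hn12 : Tendsto n12 (cocompact ℂ) (𝓝 0)) (hn22 : Tendsto n22 (cocompact ℂ) (𝓝 1)) (z : ℂ) :
    m11 z = conj (n22 z) ∧ m21 z = conj (n12 z) := by
  have hdiff := hm.sub (.of_conj hn12d hn22d hn1 hn2)
  obtain ⟨h11, h21⟩ := hdiff.eq_zero hq hqsupp
    (by simpa using hm11.sub ((continuous_conj.tendsto 1).comp hn22))
    (by simpa using hm21.sub ((continuous_conj.tendsto 0).comp hn12))
  exact ⟨sub_eq_zero.1 (congrFun h11 z), sub_eq_zero.1 (congrFun h21 z)⟩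

end

/-- The symmetry relations `m₁₁(z,k) = conj(m₂₂(z,k̄))` and `m₂₁(z,k) = conj(m₁₂(z,k̄))`
between the first column of `m(·,k)` and the second column of `m(·,k̄)`. -/
theorem symmetry_of_exponentially_growing_solutions
    (ε : ℝ) (hε0 : 0 < ε) (hε1 : ε < 1) (q : ℂ → ℂ)
    (hqsupp : HasCompactSupport q) (hqhold : IsHolder ε q)
    (r : ℝ) (hr : 2 < r) (k : ℂ)
    (m11 m21 : ℂ → ℂ)
    (hm11d : Differentiable ℝ m11) (hm21d : Differentiable ℝ m21)
    (hm1 : ∀ z, wDbar m11 z = q z * m21 z)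
    (hm2 : ∀ z, wD m21 z + Complex.I * k * m21 z = (starRingEnd ℂ) (q z) * m11 z)
    (hm11Lp : MemLp (fun z => m11 z - 1) (ENNReal.ofReal r))
    (hm21Lp : MemLp m21 (ENNReal.ofReal r))
    (hm11H : IsHolder ε (fun z => m11 z - 1)) (hm21H : IsHolder ε m21)
    (n12 n22 : ℂ → ℂ)
    (hn12d : Differentiable ℝ n12) (hn22d : Differentiable ℝ n22)
    (hn1 : ∀ z, wDbar n12 z - Complex.I * (starRingEnd ℂ) k * n12 z = q z * n22 z)
    (hn2 : ∀ z, wD n22 z = (starRingEnd ℂ) (q z) * n12 z)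
    (hn22Lp : MemLp (fun z => n22 z - 1) (ENNReal.ofReal r))
    (hn12Lp : MemLp n12 (ENNReal.ofReal r))
    (hn22H : IsHolder ε (fun z => n22 z - 1)) (hn12H : IsHolder ε n12) :
    ∀ z : ℂ, m11 z = (starRingEnd ℂ) (n22 z) ∧ m21 z = (starRingEnd ℂ) (n12 z) := by
  have hr0 : 0 < r := by linarith
  exact symmetry_of_exponentially_growing_solutions_general
    (hqhold.uniformContinuous hε0).continuous hqsupp ⟨hm11d, hm21d, hm1, hm2⟩
    (tendsto_sub_nhds_zero_iff.1 (hm11H.tendsto_cocompact_zero hε0 hr0 hm11Lp))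
    (hm21H.tendsto_cocompact_zero hε0 hr0 hm21Lp) hn12d hn22d hn1 hn2
    (hn12H.tendsto_cocompact_zero hε0 hr0 hn12Lp)
    (tendsto_sub_nhds_zero_iff.1 (hn22H.tendsto_cocompact_zero hε0 hr0 hn22Lp))
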